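/- Let 𝔤 be a finite-dimensional complex simple Lie algebra with Cartan subalgebra 𝔥, root system Φ, base Δ, and let α ∈ Δ be a long simple root. Set Σ_q := {α} ∪ N(α), where N(α) is the set of simple roots γ ≠ α with (γ,α) ≠ 0. Then every root β with n_α(β) = 0 satisfies |ht_{Σ_q}(β)| ≤ 1. Consequently, setting q_1^V := ⊕ {𝔤_β : n_α(β) = 0 and ht_{Σ_q}(β) = 1}, the subspace q_1^V equals the intersection of p_0 := 𝔥 ⊕ ⊕_{n_α(β)=0} 𝔤_β with ⊕_{ht_{Σ_q}(β) ≥ 1} 𝔤_β, and q_1^V is an abelian Lie subalgebra of 𝔤, i.e. ⁅q_1^V, q_1^V⁆ = 0 (and likewise for the negative counterpart q_{-1}^V). -/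

import Mathlib

open scoped RealInnerProductSpace Classical

/-!
Let `⟨β, α⟩ = 2 (β, α) / (α, α)` and let `β` be a root with `n_α(β) = 0`. Every Dynkin neighbour `γ`
of `α` has `⟨γ, α⟩ ≤ -1`, every simple root outside `Σ_q` has `⟨γ, α⟩ = 0`, and the coefficients of
`β` share one sign. There is thus no cancellation in `⟨β, α⟩ = ∑ n_γ(β) ⟨γ, α⟩`, and
`|ht_{Σ_q}(β)| ≤ |⟨β, α⟩|`. As `α` is long and `β` is not proportional to `α`, Cauchy–Schwarz gives
`|⟨β, α⟩| < 2`, so the integer `ht_{Σ_q}(β)` has absolute value at most one. Since `ht_{Σ_q}` is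
additive, two roots with `n_α = 0` and the same height `±1` sum neither to a root nor to zero, so
their root spaces commute.
-/

theorem abs_sum_le_abs_sum_mul_of_le_neg_one {ι R : Type*} [CommRing R] [LinearOrder R]
    [IsStrictOrderedRing R] {s : Finset ι} {a c : ι → R}
    (ha : (∀ i ∈ s, 0 ≤ a i) ∨ ∀ i ∈ s, a i ≤ 0) (hc : ∀ i ∈ s, c i ≤ -1) :
    |∑ i ∈ s, a i| ≤ |∑ i ∈ s, a i * c i| := by
  rcases ha with ha | ha
  · calc |∑ i ∈ s, a i| = ∑ i ∈ s, a i := abs_of_nonneg (Finset.sum_nonneg ha)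
      _ ≤ ∑ i ∈ s, -(a i * c i) := Finset.sum_le_sum fun i hi => by nlinarith [ha i hi, hc i hi]
      _ = -∑ i ∈ s, a i * c i := Finset.sum_neg_distrib _
      _ ≤ |∑ i ∈ s, a i * c i| := neg_le_abs _
  · calc |∑ i ∈ s, a i| = ∑ i ∈ s, -a i := by
          rw [abs_of_nonpos (Finset.sum_nonpos ha), Finset.sum_neg_distrib]
      _ ≤ ∑ i ∈ s, a i * c i := Finset.sum_le_sum fun i hi => by nlinarith [ha i hi, hc i hi]
      _ ≤ |∑ i ∈ s, a i * c i| := le_abs_self _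

theorem disjoint_biSup_biSup_of_iSupIndep_restrict {ι A : Type*} [CompleteLattice A]
    [IsModularLattice A] [IsCompactlyGenerated A] {f : ι → A} {Φ S T : Set ι}
    (hf : iSupIndep fun i : Φ => f i) (hS : S ⊆ Φ) (hT : T ⊆ Φ) (hST : Disjoint S T) :
    Disjoint (⨆ i ∈ S, f i) (⨆ i ∈ T, f i) := by
  lift S to Set Φ using hS
  lift T to Set Φ using hT
  rw [Set.disjoint_image_iff Subtype.val_injective] at hST
  simpa only [iSup_image] using hf.disjoint_biSup_biSup hST

theorem sup_biSup_inf_biSup {ι A : Type*} [CompleteLattice A] [IsModularLattice A]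
    [IsCompactlyGenerated A] {a : A} {f : ι → A} {Φ S T : Set ι}
    (ha : Disjoint a (⨆ i ∈ Φ, f i)) (hf : iSupIndep fun i : Φ => f i)
    (hS : S ⊆ Φ) (hT : T ⊆ Φ) :
    (a ⊔ ⨆ i ∈ S, f i) ⊓ ⨆ i ∈ T, f i = ⨆ i ∈ S ∩ T, f i := by
  have hdiff : Disjoint (⨆ i ∈ T, f i) (⨆ i ∈ S \ T, f i) :=
    disjoint_biSup_biSup_of_iSupIndep_restrict hf hT (Set.sdiff_subset.trans hS)
      Set.disjoint_sdiff_right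
  have hle : (⨆ i ∈ T, f i) ⊔ ⨆ i ∈ S \ T, f i ≤ ⨆ i ∈ Φ, f i :=
    sup_le (biSup_mono hT) (biSup_mono fun i hi => hS hi.1)
  have hrest : Disjoint ((⨆ i ∈ S \ T, f i) ⊔ a) (⨆ i ∈ T, f i) :=
    (hdiff.disjoint_sup_right_of_disjoint_sup_left (ha.symm.mono_left hle)).symm
  have hsplit : a ⊔ ⨆ i ∈ S, f i = (⨆ i ∈ S ∩ T, f i) ⊔ ((⨆ i ∈ S \ T, f i) ⊔ a) := by
    rw [← sup_assoc, ← iSup_union, Set.inter_union_sdiff, sup_comm]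
  have hinter : ⨆ i ∈ S ∩ T, f i ≤ ⨆ i ∈ T, f i := biSup_mono fun i hi => hi.2
  rw [hsplit, sup_inf_assoc_of_le _ hinter, hrest.eq_bot, sup_bot_eq]

theorem lie_eq_zero_of_mem_biSup {R L M ι κ : Type*} [CommRing R] [LieRing L] [LieAlgebra R L]
    [AddCommGroup M] [Module R M] [LieRingModule L M] [LieModule R L M]
    {f : ι → Submodule R L} {f' : κ → Submodule R M} {S : Set ι} {T : Set κ}
    (hST : ∀ i ∈ S, ∀ j ∈ T, ∀ x ∈ f i, ∀ y ∈ f' j, ⁅x, y⁆ = 0)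
    {x : L} (hx : x ∈ ⨆ i ∈ S, f i) {y : M} (hy : y ∈ ⨆ j ∈ T, f' j) : ⁅x, y⁆ = 0 := by
  have hleft : ⨆ i ∈ S, f i ≤
      LinearMap.ker ((LieModule.toEnd R L M : L →ₗ[R] M →ₗ[R] M).flip y) :=
    iSup₂_le fun i hi z hz => by
      have hright : ⨆ j ∈ T, f' j ≤ LinearMap.ker (LieModule.toEnd R L M z) :=
        iSup₂_le fun j hj w hw => hST i hi j hj z hz w hw
      exact hright hy
  exact hleft hx

section RootBase

/-- The height `ht_S(β)` of `β` relative to a set `S` of simple roots; `n β γ` is `n_γ(β)`. -/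
def partialHeight {E : Type*} (n : E → E → ℤ) (S : Finset E) (β : E) : ℤ := ∑ γ ∈ S, n β γ

variable {E : Type*} [AddCommGroup E] [Module ℝ E]

/-- `Δ` is a base of the set of roots `Φ`, and `n β γ` is the coefficient `n_γ(β)` of the simple
root `γ` in the root `β`. The values of `n` outside `Φ × Δ` are unconstrained, and no symmetry of
`Φ` under reflections is assumed. -/
structure IsRootBase (Φ : Set E) (Δ : Finset E) (n : E → E → ℤ) : Prop where
  subset : ↑Δ ⊆ Φ
  linearIndepOn : LinearIndepOn ℝ id (Δ : Set E)
  eq_sum : ∀ β ∈ Φ, β = ∑ γ ∈ Δ, (n β γ : ℝ) • γ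
  nonneg_or_nonpos : ∀ β ∈ Φ, (∀ γ ∈ Δ, 0 ≤ n β γ) ∨ ∀ γ ∈ Δ, n β γ ≤ 0

namespace IsRootBase

variable {Φ : Set E} {Δ S : Finset E} {n : E → E → ℤ} {α β γ δ : E}

theorem ne_zero (hΔ : IsRootBase Φ Δ n) (hα : α ∈ Δ) : α ≠ 0 :=
  hΔ.linearIndepOn.ne_zero hα

theorem coeff_eq (hΔ : IsRootBase Φ Δ n) (hβ : β ∈ Φ) {a : E → ℝ}
    (ha : β = ∑ γ ∈ Δ, a γ • γ) (hδ : δ ∈ Δ) : (n β δ : ℝ) = a δ :=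
  linearIndepOn_finset_iffₛ.1 hΔ.linearIndepOn (fun γ => (n β γ : ℝ)) a
    ((hΔ.eq_sum β hβ).symm.trans ha) δ hδ

theorem coeff_eq_of_eq_smul (hΔ : IsRootBase Φ Δ n) (hβ : β ∈ Φ) (hα : α ∈ Δ) {t : ℝ}
    (ht : β = t • α) : (n β α : ℝ) = t := by
  have hsum : β = ∑ γ ∈ Δ, (if γ = α then t else 0) • γ := by
    simpa only [ite_smul, zero_smul, Finset.sum_ite_eq', hα, if_true] using ht
  simpa using hΔ.coeff_eq hβ hsum hα

theorem coeff_add (hΔ : IsRootBase Φ Δ n) (hβ : β ∈ Φ) (hγ : γ ∈ Φ) (hβγ : β + γ ∈ Φ)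
    (hδ : δ ∈ Δ) : n (β + γ) δ = n β δ + n γ δ := by
  have hsum : β + γ = ∑ δ ∈ Δ, ((n β δ : ℝ) + n γ δ) • δ := by
    simp only [add_smul, Finset.sum_add_distrib]
    rw [← hΔ.eq_sum β hβ, ← hΔ.eq_sum γ hγ]
  exact_mod_cast hΔ.coeff_eq hβγ hsum hδ

theorem coeff_neg (hΔ : IsRootBase Φ Δ n) (hβ : β ∈ Φ) (hβ' : -β ∈ Φ) (hδ : δ ∈ Δ) :
    n (-β) δ = -n β δ := by
  have hsum : -β = ∑ δ ∈ Δ, (-(n β δ : ℝ)) • δ := by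
    simp only [neg_smul, Finset.sum_neg_distrib]
    rw [← hΔ.eq_sum β hβ]
  exact_mod_cast hΔ.coeff_eq hβ' hsum hδ

theorem partialHeight_add (hΔ : IsRootBase Φ Δ n) (hS : S ⊆ Δ) (hβ : β ∈ Φ) (hγ : γ ∈ Φ)
    (hβγ : β + γ ∈ Φ) :
    partialHeight n S (β + γ) = partialHeight n S β + partialHeight n S γ := by
  simp only [partialHeight, ← Finset.sum_add_distrib]
  exact Finset.sum_congr rfl fun δ hδ => hΔ.coeff_add hβ hγ hβγ (hS hδ)

theorem partialHeight_neg (hΔ : IsRootBase Φ Δ n) (hS : S ⊆ Δ) (hβ : β ∈ Φ) (hβ' : -β ∈ Φ) :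
    partialHeight n S (-β) = -partialHeight n S β := by
  simp only [partialHeight, ← Finset.sum_neg_distrib]
  exact Finset.sum_congr rfl fun δ hδ => hΔ.coeff_neg hβ hβ' (hS hδ)

theorem nonpos_of_sub_smul_mem (hΔ : IsRootBase Φ Δ n) (hα : α ∈ Δ) (hγ : γ ∈ Δ) (hne : γ ≠ α)
    {c : ℝ} (hmem : γ - c • α ∈ Φ) : c ≤ 0 := by
  have hsum : γ - c • α =
      ∑ ε ∈ Δ, ((if ε = γ then 1 else 0) - (if ε = α then c else 0)) • ε := by
    simp only [sub_smul, Finset.sum_sub_distrib, ite_smul, zero_smul, one_smul,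
      Finset.sum_ite_eq', hγ, hα, if_true]
  have hcoeffγ : (n (γ - c • α) γ : ℝ) = 1 := by
    simpa [hne] using hΔ.coeff_eq hmem hsum hγ
  have hcoeffα : (n (γ - c • α) α : ℝ) = -c := by
    simpa [hne.symm] using hΔ.coeff_eq hmem hsum hα
  rcases hΔ.nonneg_or_nonpos _ hmem with hsign | hsign
  · have : (0 : ℝ) ≤ n (γ - c • α) α := Int.cast_nonneg (hsign α hα)
    linarith
  · have : (n (γ - c • α) γ : ℝ) ≤ 0 := Int.cast_nonpos.2 (hsign γ hγ)
    linarith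

theorem lie_eq_zero_of_mem_biSup_partialHeight_eq {R L : Type*} [CommRing R] [LieRing L]
    [LieAlgebra R L] {g : E → Submodule R L} (hΔ : IsRootBase Φ Δ n) (hα : α ∈ Δ) (hS : S ⊆ Δ)
    (hbound : ∀ β ∈ Φ, n β α = 0 → |partialHeight n S β| ≤ 1)
    (hgg : ∀ β ∈ Φ, ∀ γ ∈ Φ, β + γ ∉ Φ → β + γ ≠ 0 → ∀ x ∈ g β, ∀ y ∈ g γ, ⁅x, y⁆ = 0)
    {k : ℤ} (hk : k ≠ 0) {x y : L}
    (hx : x ∈ ⨆ β ∈ {β | β ∈ Φ ∧ n β α = 0 ∧ partialHeight n S β = k}, g β)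
    (hy : y ∈ ⨆ β ∈ {β | β ∈ Φ ∧ n β α = 0 ∧ partialHeight n S β = k}, g β) : ⁅x, y⁆ = 0 := by
  refine lie_eq_zero_of_mem_biSup ?_ hx hy
  rintro β ⟨hβ, hβα, hβk⟩ γ ⟨hγ, hγα, hγk⟩
  refine hgg β hβ γ hγ (fun hβγ => ?_) fun hβγ => ?_
  · have hle := hbound _ hβγ (by rw [hΔ.coeff_add hβ hγ hβγ hα, hβα, hγα, add_zero])
    rw [hΔ.partialHeight_add hS hβ hγ hβγ, hβk, hγk, abs_le] at hle
    omega
  · obtain rfl : γ = -β := eq_neg_of_add_eq_zero_right hβγ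
    rw [hΔ.partialHeight_neg hS hβ hγ, hβk] at hγk
    omega

end IsRootBase

end RootBase

section Cartan

variable {E : Type*} [NormedAddCommGroup E] [InnerProductSpace ℝ E] {α β : E}

/-- The Cartan number `⟨β, α⟩ = 2 (β, α) / (α, α)`, linear in `β`, for which the
reflection in `α` is `β ↦ β - ⟨β, α⟩ α`. It takes the junk value `0` at `α = 0`. -/
noncomputable def cartanNumber (β α : E) : ℝ := 2 * ⟪β, α⟫ / ⟪α, α⟫

theorem cartanNumber_sum_smul {ι : Type*} (s : Finset ι) (a : ι → ℝ) (v : ι → E) (α : E) :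
    cartanNumber (∑ i ∈ s, a i • v i) α = ∑ i ∈ s, a i * cartanNumber (v i) α := by
  simp only [cartanNumber, sum_inner, real_inner_smul_left, Finset.mul_sum, Finset.sum_div]
  exact Finset.sum_congr rfl fun i _ => by ring

theorem cartanNumber_eq_zero_of_inner_eq_zero (h : ⟪β, α⟫ = 0) : cartanNumber β α = 0 := by
  rw [cartanNumber, h, mul_zero, zero_div]

theorem cartanNumber_ne_zero (hα : α ≠ 0) (h : ⟪β, α⟫ ≠ 0) : cartanNumber β α ≠ 0 :=
  div_ne_zero (mul_ne_zero two_ne_zero h) (inner_self_ne_zero.2 hα)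

theorem abs_inner_lt_norm_mul_norm (hα : α ≠ 0) (hβα : ∀ t : ℝ, β ≠ t • α) :
    |⟪β, α⟫| < ‖β‖ * ‖α‖ := by
  have hβ : β ≠ 0 := by simpa only [zero_smul] using hβα 0
  refine (abs_real_inner_le_norm β α).lt_of_ne fun heq => ?_
  rw [real_inner_comm, mul_comm] at heq
  obtain ⟨t, -, ht⟩ := (norm_inner_eq_norm_iff (𝕜 := ℝ) hα hβ).1 heq
  exact hβα t ht

theorem abs_cartanNumber_lt_two (hα : α ≠ 0) (hle : ⟪β, β⟫ ≤ ⟪α, α⟫)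
    (hβα : ∀ t : ℝ, t ≠ 0 → β ≠ t • α) : |cartanNumber β α| < 2 := by
  rcases eq_or_ne β 0 with rfl | hβ
  · simp [cartanNumber]
  have hnorm : ‖β‖ ≤ ‖α‖ := by
    simpa only [real_inner_self_eq_norm_sq, sq_le_sq₀, norm_nonneg] using hle
  have hne : ∀ t : ℝ, β ≠ t • α := fun t ht => hβα t (by rintro rfl; simp_all) ht
  have hinner : |⟪β, α⟫| < ⟪α, α⟫ := calc
    |⟪β, α⟫| < ‖β‖ * ‖α‖ := abs_inner_lt_norm_mul_norm hα hne
    _ ≤ ‖α‖ * ‖α‖ := by gcongr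
    _ = ⟪α, α⟫ := (real_inner_self_eq_norm_mul_norm α).symm
  have hpos : 0 < ⟪α, α⟫ := real_inner_self_pos.2 hα
  rw [cartanNumber, abs_div, abs_mul, abs_two, abs_of_pos hpos, div_lt_iff₀ hpos]
  linarith

end Cartan

section DynkinStar

variable {E : Type*} [NormedAddCommGroup E] [InnerProductSpace ℝ E]

/-- The set `N(α)` of neighbours of `α` in the Dynkin diagram with set of nodes `Δ`. -/
noncomputable def dynkinNeighbors (Δ : Finset E) (α : E) : Finset E :=
  Δ.filter fun γ => γ ≠ α ∧ ⟪γ, α⟫ ≠ 0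

/-- The set `Σ_q = {α} ∪ N(α)`: the node `α` of the Dynkin diagram with its neighbours. -/
noncomputable def dynkinStar (Δ : Finset E) (α : E) : Finset E :=
  insert α (dynkinNeighbors Δ α)

theorem dynkinStar_subset {Δ : Finset E} {α : E} (hα : α ∈ Δ) : dynkinStar Δ α ⊆ Δ :=
  Finset.insert_subset hα (Finset.filter_subset _ _)

theorem partialHeight_dynkinStar {n : E → E → ℤ} {Δ : Finset E} {α β : E} (h : n β α = 0) :
    partialHeight n (dynkinStar Δ α) β = partialHeight n (dynkinNeighbors Δ α) β := by
  have hα : α ∉ dynkinNeighbors Δ α := by simp [dynkinNeighbors]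
  rw [partialHeight, dynkinStar, Finset.sum_insert hα, h, zero_add, partialHeight]

namespace IsRootBase

variable {Φ : Set E} {Δ : Finset E} {n : E → E → ℤ} {α β γ : E}

theorem cartanNumber_le_neg_one (hΔ : IsRootBase Φ Δ n) (hα : α ∈ Δ)
    (hγ : γ ∈ dynkinNeighbors Δ α) (hrefl : γ - cartanNumber γ α • α ∈ Φ)
    (hint : ∃ m : ℤ, cartanNumber γ α = m) : cartanNumber γ α ≤ -1 := by
  obtain ⟨hγΔ, hne, hinner⟩ := Finset.mem_filter.1 hγ
  have hneg : cartanNumber γ α < 0 :=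
    (hΔ.nonpos_of_sub_smul_mem hα hγΔ hne hrefl).lt_of_ne
      (cartanNumber_ne_zero (hΔ.ne_zero hα) hinner)
  obtain ⟨m, hm⟩ := hint
  rw [hm] at hneg ⊢
  have : m < 0 := by exact_mod_cast hneg
  exact_mod_cast Int.le_sub_one_of_lt this

theorem cartanNumber_eq_sum_dynkinNeighbors (hΔ : IsRootBase Φ Δ n) (hβ : β ∈ Φ)
    (hβα : n β α = 0) :
    cartanNumber β α = ∑ γ ∈ dynkinNeighbors Δ α, (n β γ : ℝ) * cartanNumber γ α := by
  conv_lhs => rw [hΔ.eq_sum β hβ, cartanNumber_sum_smul]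
  refine (Finset.sum_subset (Finset.filter_subset _ _) fun γ hγ hγN => ?_).symm
  rcases eq_or_ne γ α with rfl | hne
  · rw [hβα, Int.cast_zero, zero_mul]
  · have horth : ⟪γ, α⟫ = 0 := by
      by_contra hinner
      exact hγN (Finset.mem_filter.2 ⟨hγ, hne, hinner⟩)
    rw [cartanNumber_eq_zero_of_inner_eq_zero horth, mul_zero]

theorem abs_partialHeight_dynkinStar_le_abs_cartanNumber (hΔ : IsRootBase Φ Δ n) (hα : α ∈ Δ)
    (hrefl : ∀ γ ∈ Φ, γ - cartanNumber γ α • α ∈ Φ)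
    (hint : ∀ γ ∈ Φ, ∃ m : ℤ, cartanNumber γ α = m) (hβ : β ∈ Φ) (hβα : n β α = 0) :
    |(partialHeight n (dynkinStar Δ α) β : ℝ)| ≤ |cartanNumber β α| := by
  have hN : dynkinNeighbors Δ α ⊆ Δ := Finset.filter_subset _ _
  have hsign : (∀ γ ∈ dynkinNeighbors Δ α, (0 : ℝ) ≤ n β γ) ∨
      ∀ γ ∈ dynkinNeighbors Δ α, (n β γ : ℝ) ≤ 0 :=
    (hΔ.nonneg_or_nonpos β hβ).imp (fun h γ hγ => Int.cast_nonneg (h γ (hN hγ)))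
      fun h γ hγ => Int.cast_nonpos.2 (h γ (hN hγ))
  rw [partialHeight_dynkinStar hβα, hΔ.cartanNumber_eq_sum_dynkinNeighbors hβ hβα,
    partialHeight, Int.cast_sum]
  exact abs_sum_le_abs_sum_mul_of_le_neg_one hsign fun γ hγ =>
    hΔ.cartanNumber_le_neg_one hα hγ (hrefl γ (hΔ.subset (hN hγ))) (hint γ (hΔ.subset (hN hγ)))

theorem abs_partialHeight_dynkinStar_le_one (hΔ : IsRootBase Φ Δ n) (hα : α ∈ Δ)
    (hrefl : ∀ γ ∈ Φ, γ - cartanNumber γ α • α ∈ Φ)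
    (hint : ∀ γ ∈ Φ, ∃ m : ℤ, cartanNumber γ α = m) (hβ : β ∈ Φ) (hβα : n β α = 0)
    (hle : ⟪β, β⟫ ≤ ⟪α, α⟫) : |partialHeight n (dynkinStar Δ α) β| ≤ 1 := by
  have hnot_smul (t : ℝ) (ht : t ≠ 0) : β ≠ t • α := fun h =>
    ht (by rw [← hΔ.coeff_eq_of_eq_smul hβ hα h, hβα, Int.cast_zero])
  have hlt : |(partialHeight n (dynkinStar Δ α) β : ℝ)| < 2 :=
    (hΔ.abs_partialHeight_dynkinStar_le_abs_cartanNumber hα hrefl hint hβ hβα).trans_lt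
      (abs_cartanNumber_lt_two (hΔ.ne_zero hα) hle hnot_smul)
  exact Int.lt_add_one_iff.1 (by exact_mod_cast hlt)

end IsRootBase

end DynkinStar

theorem q1V_abelian_general {E : Type*} [NormedAddCommGroup E] [InnerProductSpace ℝ E]
    {R L : Type*} [CommRing R] [LieRing L] [LieAlgebra R L] {Φ : Set E} {Δ : Finset E}
    {n : E → E → ℤ} {α : E} {h : Submodule R L} {g : E → Submodule R L}
    (hΔ : IsRootBase Φ Δ n) (hα : α ∈ Δ)
    (hrefl : ∀ γ ∈ Φ, γ - cartanNumber γ α • α ∈ Φ)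
    (hint : ∀ γ ∈ Φ, ∃ m : ℤ, cartanNumber γ α = m)
    (hlong : ∀ β ∈ Φ, ⟪β, β⟫ ≤ ⟪α, α⟫)
    (hgg : ∀ β ∈ Φ, ∀ γ ∈ Φ, β + γ ∉ Φ → β + γ ≠ 0 → ∀ x ∈ g β, ∀ y ∈ g γ, ⁅x, y⁆ = 0)
    (hh : Disjoint h (⨆ β ∈ Φ, g β)) (hg : iSupIndep fun β : Φ => g β) :
    letI ht := partialHeight n (dynkinStar Δ α)
    letI p₀ := h ⊔ ⨆ β ∈ {β | β ∈ Φ ∧ n β α = 0}, g β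
    letI qV (k : ℤ) := ⨆ β ∈ {β | β ∈ Φ ∧ n β α = 0 ∧ ht β = k}, g β
    (∀ β ∈ Φ, n β α = 0 → |ht β| ≤ 1) ∧
    qV 1 = p₀ ⊓ (⨆ β ∈ {β | β ∈ Φ ∧ 1 ≤ ht β}, g β) ∧
    qV (-1) = p₀ ⊓ (⨆ β ∈ {β | β ∈ Φ ∧ ht β ≤ -1}, g β) ∧
    (∀ x ∈ qV 1, ∀ y ∈ qV 1, ⁅x, y⁆ = 0) ∧
    (∀ x ∈ qV (-1), ∀ y ∈ qV (-1), ⁅x, y⁆ = 0) := by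
  have hbound : ∀ β ∈ Φ, n β α = 0 → |partialHeight n (dynkinStar Δ α) β| ≤ 1 :=
    fun β hβ hβα =>
      hΔ.abs_partialHeight_dynkinStar_le_one hα hrefl hint hβ hβα (hlong β hβ)
  have hcomm {k : ℤ} (hk : k ≠ 0) := fun x hx y hy =>
    hΔ.lie_eq_zero_of_mem_biSup_partialHeight_eq (x := x) (y := y) hα (dynkinStar_subset hα)
      hbound hgg hk hx hy
  refine ⟨hbound, ?_, ?_, hcomm one_ne_zero, hcomm (neg_ne_zero.2 one_ne_zero)⟩
  all_goals
    rw [sup_biSup_inf_biSup hh hg (fun β hβ => hβ.1) (fun β hβ => hβ.1)]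
    -- `|ht β| ≤ 1` turns `1 ≤ ht β` into `ht β = 1`, and likewise `ht β ≤ -1` into `ht β = -1`.
    congr! 3 with β
    grind

/-- Let `𝔤 = L` be a finite-dimensional complex simple Lie algebra with Cartan subalgebra
`𝔥 = h`, root system `Φ` (realized in a real inner product space `E`, with root spaces
`g β` and root space decomposition), base `Δ`, and let `α ∈ Δ` be a long simple root.
Set `Σ_q := {α} ∪ N(α)`, where `N(α)` is the set of simple roots `γ ≠ α` with
`(γ,α) ≠ 0`.  Then every root `β` with `n_α(β) = 0` satisfies `|ht_{Σ_q}(β)| ≤ 1`.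
Consequently, setting `q_1^V := ⊕ {𝔤_β : n_α(β) = 0, ht_{Σ_q}(β) = 1}`, the subspace
`q_1^V` equals the intersection of `p_0 := 𝔥 ⊕ ⊕_{n_α(β)=0} 𝔤_β` with
`⊕_{ht_{Σ_q}(β) ≥ 1} 𝔤_β`, and `q_1^V` is an abelian subalgebra, i.e.
`⁅q_1^V, q_1^V⁆ = 0` (and likewise for the negative counterpart `q_{-1}^V`). -/
theorem q1V_abelian
    {E : Type*} [NormedAddCommGroup E] [InnerProductSpace ℝ E]
    {L : Type*} [LieRing L] [LieAlgebra ℂ L] [FiniteDimensional ℂ L]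
    [LieAlgebra.IsSimple ℂ L]
    (Φ : Finset E)
    (hΦ0 : (0 : E) ∉ Φ)
    (hspan : Submodule.span ℝ (Φ : Set E) = ⊤)
    (hrefl : ∀ α ∈ Φ, ∀ β ∈ Φ, β - (2 * ⟪β, α⟫ / ⟪α, α⟫) • α ∈ Φ)
    (hcrys : ∀ α ∈ Φ, ∀ β ∈ Φ, ∃ m : ℤ, 2 * ⟪β, α⟫ / ⟪α, α⟫ = (m : ℝ))
    (hred : ∀ α ∈ Φ, ∀ t : ℝ, t • α ∈ Φ → t = 1 ∨ t = -1)
    (hirr : ∀ S : Set E,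
      (∀ β ∈ Φ, ∀ γ ∈ Φ, β ∈ S → ⟪β, γ⟫ ≠ 0 → γ ∈ S) →
      (∃ β ∈ Φ, β ∈ S) → ∀ β ∈ Φ, β ∈ S)
    (Δ : Finset E) (hΔΦ : (Δ : Set E) ⊆ (Φ : Set E))
    (hΔli : LinearIndependent ℝ (fun γ : Δ => (γ : E)))
    (n : E → E → ℤ)
    (hn : ∀ β ∈ Φ, β = ∑ γ ∈ Δ, (n β γ : ℝ) • γ)
    (hsign : ∀ β ∈ Φ, (∀ γ ∈ Δ, 0 ≤ n β γ) ∨ (∀ γ ∈ Δ, n β γ ≤ 0))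
    -- the Cartan subalgebra and the root space decomposition
    (h : Submodule ℂ L) (g : E → Submodule ℂ L)
    (habel : ∀ x ∈ h, ∀ y ∈ h, ⁅x, y⁆ = 0)
    (hgne : ∀ β ∈ Φ, g β ≠ ⊥)
    (hhg : ∀ β ∈ Φ, ∀ x ∈ h, ∀ y ∈ g β, ⁅x, y⁆ ∈ g β)
    (hgg : ∀ β ∈ Φ, ∀ γ ∈ Φ, ∀ x ∈ g β, ∀ y ∈ g γ,
      (β + γ ∈ Φ → ⁅x, y⁆ ∈ g (β + γ)) ∧ (β + γ = 0 → ⁅x, y⁆ ∈ h) ∧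
      (β + γ ∉ Φ → β + γ ≠ 0 → ⁅x, y⁆ = 0))
    (hdec : h ⊔ (⨆ β ∈ Φ, g β) = ⊤)
    (hindh : Disjoint h (⨆ β ∈ Φ, g β))
    (hindg : ∀ β ∈ Φ, Disjoint (g β) (h ⊔ ⨆ γ ∈ Φ.erase β, g γ))
    -- the long simple root `α`, its Dynkin neighbors, `Σ_q` and the height `ht_{Σ_q}`
    (α : E) (hαΔ : α ∈ Δ)
    (hlong : ∀ γ ∈ Φ, ⟪γ, γ⟫ ≤ ⟪α, α⟫)
    (Nbr : Finset E) (hNbr : Nbr = Δ.filter fun γ => γ ≠ α ∧ ⟪γ, α⟫ ≠ 0)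
    (Sq : Finset E) (hSq : Sq = insert α Nbr)
    (htq : E → ℤ) (hhtq : ∀ β, htq β = ∑ γ ∈ Sq, n β γ)
    -- the subspaces `q_{±1}^V` and `p_0`
    (q1V qm1V p0 : Submodule ℂ L)
    (hq1V : q1V = ⨆ β ∈ {β : E | β ∈ Φ ∧ n β α = 0 ∧ htq β = 1}, g β)
    (hqm1V : qm1V = ⨆ β ∈ {β : E | β ∈ Φ ∧ n β α = 0 ∧ htq β = -1}, g β)
    (hp0 : p0 = h ⊔ ⨆ β ∈ {β : E | β ∈ Φ ∧ n β α = 0}, g β) :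
    (∀ β ∈ Φ, n β α = 0 → |htq β| ≤ 1) ∧
    q1V = p0 ⊓ (⨆ β ∈ {β : E | β ∈ Φ ∧ 1 ≤ htq β}, g β) ∧
    qm1V = p0 ⊓ (⨆ β ∈ {β : E | β ∈ Φ ∧ htq β ≤ -1}, g β) ∧
    (∀ x ∈ q1V, ∀ y ∈ q1V, ⁅x, y⁆ = 0) ∧
    (∀ x ∈ qm1V, ∀ y ∈ qm1V, ⁅x, y⁆ = 0) := by
  subst hNbr hSq hq1V hqm1V hp0
  obtain rfl : htq = partialHeight n (dynkinStar Δ α) := funext hhtq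
  have hΔ : IsRootBase (Φ : Set E) Δ n := ⟨hΔΦ, hΔli, hn, hsign⟩
  have hg : Φ.SupIndep g := Finset.supIndep_iff_disjoint_erase.2 fun β hβ => by
    simpa only [Finset.sup_eq_iSup] using (hindg β hβ).mono_right le_sup_right
  exact q1V_abelian_general hΔ hαΔ (hrefl α (hΔΦ hαΔ)) (hcrys α (hΔΦ hαΔ)) hlong
    (fun β hβ γ hγ hβγ hne x hx y hy => (hgg β hβ γ hγ x hx y hy).2.2 hβγ hne) hindh
    hg.independent
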